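/- Let ABC be a triangle with circumcenter O and orthocenter H, with H ∉ {A, B, C} and A ≠ O. Let A_H, B_H, C_H be the feet of the altitudes (the pedals of A, B, C on lines BC, CA, AB respectively), let A*, B*, C* be the pedals of O on lines AH, BH, CH, and assume A*, B*, C* are affinely independent with orthocenter H*. Let J be a point lying both on line AO and on line B_H C_H. Then A_H, J and H* are collinear. -/

import Mathlib

open EuclideanGeometry

noncomputable section

/-- The Euclidean plane. -/
abbrev Pt := EuclideanSpace ℝ (Fin 2)

/-- The pedal (orthogonal projection) of `P` on the line `XY` (the affine span of `{X, Y}`). -/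
def pedal (P X Y : Pt) : Pt :=
  EuclideanGeometry.orthogonalProjection (affineSpan ℝ {X, Y}) P

/-- The reflection of `P` in the line `XY` (the affine span of `{X, Y}`). -/
def lineReflect (X Y P : Pt) : Pt :=
  EuclideanGeometry.reflection (affineSpan ℝ {X, Y}) P

/-- The circumcenter of the triangle `ABC`. -/
def circumcenter3 (A B C : Pt) (h : AffineIndependent ℝ ![A, B, C]) : Pt :=
  (⟨![A, B, C], h⟩ : Affine.Triangle ℝ Pt).circumcenter

/-- The circumradius of the triangle `ABC`. -/
def circumradius3 (A B C : Pt) (h : AffineIndependent ℝ ![A, B, C]) : ℝ :=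
  (⟨![A, B, C], h⟩ : Affine.Triangle ℝ Pt).circumradius

/-- The orthocenter of the triangle `ABC`. -/
def orthocenter3 (A B C : Pt) (h : AffineIndependent ℝ ![A, B, C]) : Pt :=
  Affine.Triangle.orthocenter (⟨![A, B, C], h⟩ : Affine.Triangle ℝ Pt)

/-- The incenter of the triangle `ABC`: `(a•A + b•B + c•C)/(a+b+c)` with
`a = dist B C`, `b = dist C A`, `c = dist A B`. -/
def incenter3 (A B C : Pt) : Pt :=
  (dist B C + dist C A + dist A B)⁻¹ •
    (dist B C • A + dist C A • B + dist A B • C)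

/-- The centroid of the triangle `ABC`. -/
def centroid3 (A B C : Pt) : Pt := (3 : ℝ)⁻¹ • (A + B + C)

/-- The Nagel point of the triangle `ABC`:
`((s−a)/s)•A + ((s−b)/s)•B + ((s−c)/s)•C` with `s` the semiperimeter. -/
def nagelPoint (A B C : Pt) : Pt :=
  (((dist B C + dist C A + dist A B) / 2 - dist B C) /
      ((dist B C + dist C A + dist A B) / 2)) • A +
    (((dist B C + dist C A + dist A B) / 2 - dist C A) /
      ((dist B C + dist C A + dist A B) / 2)) • B +
    (((dist B C + dist C A + dist A B) / 2 - dist A B) /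
      ((dist B C + dist C A + dist A B) / 2)) • C

lemma pt_ext {P Q : Pt} (h0 : P 0 = Q 0) (h1 : P 1 = Q 1) : P = Q := by
  ext i; fin_cases i
  · exact h0
  · exact h1

lemma span_coords {P X Y : Pt} (h : P ∈ affineSpan ℝ ({X, Y} : Set Pt)) :
    ∃ t : ℝ, P 0 = X 0 + t * (Y 0 - X 0) ∧ P 1 = X 1 + t * (Y 1 - X 1) := by
  obtain ⟨t, rfl⟩ := (mem_affineSpan_pair_iff_exists_lineMap_eq).1 h
  refine ⟨t, ?_, ?_⟩ <;> simp [AffineMap.lineMap_apply] <;> ring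

lemma pedal_coords (P X Y : Pt) :
    (∃ t : ℝ, pedal P X Y 0 = X 0 + t * (Y 0 - X 0) ∧ pedal P X Y 1 = X 1 + t * (Y 1 - X 1)) ∧
    (P 0 - pedal P X Y 0) * (Y 0 - X 0) + (P 1 - pedal P X Y 1) * (Y 1 - X 1) = 0 := by
  refine ⟨span_coords (EuclideanGeometry.orthogonalProjection_mem P), ?_⟩
  have h := EuclideanGeometry.vsub_orthogonalProjection_mem_direction_orthogonal
    (affineSpan ℝ ({X, Y} : Set Pt)) P
  have h2 : Y -ᵥ X ∈ (affineSpan ℝ ({X, Y} : Set Pt)).direction :=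
    AffineSubspace.vsub_mem_direction (right_mem_affineSpan_pair ℝ X Y)
      (left_mem_affineSpan_pair ℝ X Y)
  have h3 := (Submodule.mem_orthogonal _ _).1 h _ h2
  simp only [PiLp.inner_apply, Fin.sum_univ_two] at h3
  simp at h3
  simp only [pedal]
  linarith

lemma pedal_eq (P X Y Q : Pt) (hXY : X ≠ Y)
    (hc : (Q 0 - X 0) * (Y 1 - X 1) - (Q 1 - X 1) * (Y 0 - X 0) = 0)
    (hi : (P 0 - Q 0) * (Y 0 - X 0) + (P 1 - Q 1) * (Y 1 - X 1) = 0) :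
    pedal P X Y = Q := by
  obtain ⟨⟨t, h0, h1⟩, h2⟩ := pedal_coords P X Y
  have hw : (Y 0 - X 0) ^ 2 + (Y 1 - X 1) ^ 2 ≠ 0 := by
    intro h
    apply hXY
    apply pt_ext <;> nlinarith [sq_nonneg (Y 0 - X 0), sq_nonneg (Y 1 - X 1)]
  generalize pedal P X Y = F at *
  have hc' : (F 0 - X 0) * (Y 1 - X 1) - (F 1 - X 1) * (Y 0 - X 0) = 0 := by
    rw [h0, h1]; ring
  apply pt_ext
  · apply mul_left_cancel₀ hw
    linear_combination (Y 1 - X 1) * (hc' - hc) - (Y 0 - X 0) * (h2 - hi)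
  · apply mul_left_cancel₀ hw
    linear_combination -(Y 0 - X 0) * (hc' - hc) - (Y 1 - X 1) * (h2 - hi)

lemma dist_sq_coords (P Q : Pt) : dist P Q ^ 2 = (P 0 - Q 0) ^ 2 + (P 1 - Q 1) ^ 2 := by
  rw [EuclideanSpace.dist_eq, Real.sq_sqrt (by positivity)]
  simp [Fin.sum_univ_two, Real.dist_eq, sq_abs]

lemma circum_dist (A B C : Pt) (h : AffineIndependent ℝ ![A, B, C]) :
    dist A (circumcenter3 A B C h) = circumradius3 A B C h ∧
    dist B (circumcenter3 A B C h) = circumradius3 A B C h ∧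
    dist C (circumcenter3 A B C h) = circumradius3 A B C h :=
  ⟨(⟨![A, B, C], h⟩ : Affine.Triangle ℝ Pt).dist_circumcenter_eq_circumradius 0,
   (⟨![A, B, C], h⟩ : Affine.Triangle ℝ Pt).dist_circumcenter_eq_circumradius 1,
   (⟨![A, B, C], h⟩ : Affine.Triangle ℝ Pt).dist_circumcenter_eq_circumradius 2⟩

lemma circum_eq (A B C P : Pt) (h : AffineIndependent ℝ ![A, B, C]) (r : ℝ)
    (hA : dist A P = r) (hB : dist B P = r) (hC : dist C P = r) :
    circumcenter3 A B C h = P := by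
  symm
  refine (⟨![A, B, C], h⟩ : Affine.Triangle ℝ Pt).eq_circumcenter_of_dist_eq (r := r) ?_ ?_
  · have : affineSpan ℝ (Set.range ![A, B, C]) = ⊤ := by
      apply h.affineSpan_eq_top_iff_card_eq_finrank_add_one.2
      simp
    simp only [this]
    exact AffineSubspace.mem_top _ _ _
  · intro i; fin_cases i
    · exact hA
    · exact hB
    · exact hC

lemma ortho_coords (A B C : Pt) (h : AffineIndependent ℝ ![A, B, C]) (i : Fin 2) :
    orthocenter3 A B C h i = A i + B i + C i - 2 * circumcenter3 A B C h i := by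
  have := Affine.Triangle.orthocenter_eq_smul_vsub_vadd_circumcenter
    (⟨![A, B, C], h⟩ : Affine.Triangle ℝ Pt)
  rw [orthocenter3, this, circumcenter3]
  have hc : (Finset.univ : Finset (Fin 3)).centroid ℝ ![A, B, C] = (3 : ℝ)⁻¹ • (A + B + C) := by
    rw [Finset.centroid_def, Finset.affineCombination_eq_linear_combination _ _ _
      (Finset.sum_centroidWeights_eq_one_of_nonempty ℝ _ Finset.univ_nonempty)]
    simp [Fin.sum_univ_three, Finset.centroidWeights]
  simp only [hc]
  simp
  ring

lemma collinear_of_cross (P Q R : Pt)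
    (h : (Q 0 - P 0) * (R 1 - P 1) - (Q 1 - P 1) * (R 0 - P 0) = 0) :
    Collinear ℝ ({P, Q, R} : Set Pt) := by
  by_cases hPQ : Q = P
  · subst hPQ
    simpa using collinear_pair ℝ Q R
  have hw : (Q 0 - P 0) ^ 2 + (Q 1 - P 1) ^ 2 ≠ 0 := by
    intro h
    apply hPQ
    apply pt_ext <;> nlinarith [sq_nonneg (Q 0 - P 0), sq_nonneg (Q 1 - P 1)]
  rw [collinear_iff_of_mem (p₀ := P) (by simp)]
  refine ⟨Q - P, ?_⟩
  intro X hX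
  simp only [Set.mem_insert_iff, Set.mem_singleton_iff] at hX
  rcases hX with rfl | rfl | rfl
  · exact ⟨0, by simp⟩
  · exact ⟨1, by simp⟩
  · refine ⟨((Q 0 - P 0) * (X 0 - P 0) + (Q 1 - P 1) * (X 1 - P 1)) /
      ((Q 0 - P 0) ^ 2 + (Q 1 - P 1) ^ 2), ?_⟩
    apply pt_ext
    · simp
      field_simp
      linear_combination -(Q 1 - P 1) * h
    · simp
      field_simp
      linear_combination (Q 0 - P 0) * h

/-- The point `O + a z` in complex notation. -/
def zpt (O : Pt) (a1 a2 z1 z2 : ℝ) : Pt := !₂[O 0 + (a1 * z1 - a2 * z2), O 1 + (a1 * z2 + a2 * z1)]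

lemma zpt0 (O : Pt) (a1 a2 z1 z2 : ℝ) : zpt O a1 a2 z1 z2 0 = O 0 + (a1 * z1 - a2 * z2) := by
  simp [zpt]

lemma zpt1 (O : Pt) (a1 a2 z1 z2 : ℝ) : zpt O a1 a2 z1 z2 1 = O 1 + (a1 * z2 + a2 * z1) := by
  simp [zpt]

lemma zpt_exists (O A B : Pt) (hAO : A ≠ O) (h : dist A O = dist B O) :
    ∃ u1 u2 : ℝ, u1 ^ 2 + u2 ^ 2 = 1 ∧ B = zpt O (A 0 - O 0) (A 1 - O 1) u1 u2 := by
  have hw : (A 0 - O 0) ^ 2 + (A 1 - O 1) ^ 2 ≠ 0 := by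
    intro h
    apply hAO
    apply pt_ext <;> nlinarith [sq_nonneg (A 0 - O 0), sq_nonneg (A 1 - O 1)]
  have hd : (A 0 - O 0) ^ 2 + (A 1 - O 1) ^ 2 = (B 0 - O 0) ^ 2 + (B 1 - O 1) ^ 2 := by
    rw [← dist_sq_coords, ← dist_sq_coords, h]
  refine ⟨((A 0 - O 0) * (B 0 - O 0) + (A 1 - O 1) * (B 1 - O 1)) /
      ((A 0 - O 0) ^ 2 + (A 1 - O 1) ^ 2),
    ((A 0 - O 0) * (B 1 - O 1) - (A 1 - O 1) * (B 0 - O 0)) /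
      ((A 0 - O 0) ^ 2 + (A 1 - O 1) ^ 2), ?_, ?_⟩
  · field_simp
    linear_combination -((A 0 - O 0) ^ 2 + (A 1 - O 1) ^ 2) * hd
  · apply pt_ext
    · rw [zpt0]; field_simp; ring
    · rw [zpt1]; field_simp; ring

/-- Pedal in complex coordinates. -/
lemma pedal_zpt (O : Pt) (a1 a2 p1 p2 x1 x2 y1 y2 q1 q2 : ℝ)
    (hXY : zpt O a1 a2 x1 x2 ≠ zpt O a1 a2 y1 y2)
    (hc : (q1 - x1) * (y2 - x2) - (q2 - x2) * (y1 - x1) = 0)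
    (hi : (p1 - q1) * (y1 - x1) + (p2 - q2) * (y2 - x2) = 0) :
    pedal (zpt O a1 a2 p1 p2) (zpt O a1 a2 x1 x2) (zpt O a1 a2 y1 y2) = zpt O a1 a2 q1 q2 := by
  apply pedal_eq _ _ _ _ hXY
  · simp only [zpt0, zpt1]
    linear_combination (a1 ^ 2 + a2 ^ 2) * hc
  · simp only [zpt0, zpt1]
    linear_combination (a1 ^ 2 + a2 ^ 2) * hi

theorem stmt14 (A B C O H AH BH CH As Bs Cs Hs J : Pt)
    (hABC : AffineIndependent ℝ ![A, B, C])
    (hO : O = circumcenter3 A B C hABC)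
    (hH : H = orthocenter3 A B C hABC)
    (hHA : H ≠ A) (hHB : H ≠ B) (hHC : H ≠ C) (hAO : A ≠ O)
    (hAH : AH = pedal A B C) (hBH : BH = pedal B C A) (hCH : CH = pedal C A B)
    (hAs : As = pedal O A H) (hBs : Bs = pedal O B H) (hCs : Cs = pedal O C H)
    (hind : AffineIndependent ℝ ![As, Bs, Cs])
    (hHs : Hs = orthocenter3 As Bs Cs hind)
    (hJ1 : J ∈ affineSpan ℝ ({A, O} : Set Pt))
    (hJ2 : J ∈ affineSpan ℝ ({BH, CH} : Set Pt)) :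
    Collinear ℝ ({AH, J, Hs} : Set Pt) := by
  have hd := circum_dist A B C hABC
  rw [← hO] at hd
  obtain ⟨dA, dB, dC⟩ := hd
  obtain ⟨u1, u2, hu, hBz⟩ := zpt_exists O A B hAO (dA.trans dB.symm)
  obtain ⟨v1, v2, hv, hCz⟩ := zpt_exists O A C hAO (dA.trans dC.symm)
  have hr : (A 0 - O 0) ^ 2 + (A 1 - O 1) ^ 2 ≠ 0 := by
    intro h
    apply hAO
    apply pt_ext <;> nlinarith [sq_nonneg (A 0 - O 0), sq_nonneg (A 1 - O 1)]
  have hAz : A = zpt O (A 0 - O 0) (A 1 - O 1) 1 0 := by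
    apply pt_ext <;> simp [zpt0, zpt1]
  have hOz : O = zpt O (A 0 - O 0) (A 1 - O 1) 0 0 := by
    apply pt_ext <;> simp [zpt0, zpt1]
  generalize A 0 - O 0 = a1 at *
  generalize A 1 - O 1 = a2 at *
  have hHz : H = zpt O a1 a2 (1 + u1 + v1) (u2 + v2) := by
    apply pt_ext
    · rw [hH, ortho_coords, ← hO, hAz, hBz, hCz]; simp only [zpt0]; ring
    · rw [hH, ortho_coords, ← hO, hAz, hBz, hCz]; simp only [zpt1]; ring
  have hAB : A ≠ B := fun h => by
    have := hABC.injective.ne (show (0 : Fin 3) ≠ 1 by decide); exact this h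
  have hBC : B ≠ C := fun h => by
    have := hABC.injective.ne (show (1 : Fin 3) ≠ 2 by decide); exact this h
  have hCA : C ≠ A := fun h => by
    have := hABC.injective.ne (show (2 : Fin 3) ≠ 0 by decide); exact this h
  have eAH : AH = zpt O a1 a2 ((1 + u1 + v1 - (u1 * v1 - u2 * v2)) / 2)
      ((u2 + v2 - (u1 * v2 + u2 * v1)) / 2) := by
    rw [hAH, hAz, hBz, hCz]
    apply pedal_zpt
    · rwa [← hBz, ← hCz]
    · grind
    · grind
  have eBH : BH = zpt O a1 a2 ((1 + u1 + v1 - (u1 * v1 + u2 * v2)) / 2)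
      ((u2 + v2 - (u1 * v2 - u2 * v1)) / 2) := by
    rw [hBH, hAz, hBz, hCz]
    apply pedal_zpt
    · rwa [← hAz, ← hCz]
    · grind
    · grind
  have eCH : CH = zpt O a1 a2 ((1 + u1 + v1 - (u1 * v1 + u2 * v2)) / 2)
      ((u2 + v2 + (u1 * v2 - u2 * v1)) / 2) := by
    rw [hCH, hAz, hBz, hCz]
    apply pedal_zpt
    · rwa [← hAz, ← hBz]
    · grind
    · grind
  have eAs : As = zpt O a1 a2 ((1 - (u1 * v1 - u2 * v2)) / 2)
      ((- (u1 * v2 + u2 * v1)) / 2) := by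
    have := pedal_zpt O a1 a2 0 0 1 0 (1 + u1 + v1) (u2 + v2) ((1 - (u1 * v1 - u2 * v2)) / 2)
      ((- (u1 * v2 + u2 * v1)) / 2) (by rw [← hAz, ← hHz]; exact hHA.symm) (by grind) (by grind)
    rw [← hOz, ← hAz, ← hHz] at this
    rw [hAs, this]
  have eBs : Bs = zpt O a1 a2 ((u1 - (u1 * v1 + u2 * v2)) / 2)
      ((u2 - (u1 * v2 - u2 * v1)) / 2) := by
    have := pedal_zpt O a1 a2 0 0 u1 u2 (1 + u1 + v1) (u2 + v2) ((u1 - (u1 * v1 + u2 * v2)) / 2)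
      ((u2 - (u1 * v2 - u2 * v1)) / 2) (by rw [← hBz, ← hHz]; exact hHB.symm) (by grind) (by grind)
    rw [← hOz, ← hBz, ← hHz] at this
    rw [hBs, this]
  have eCs : Cs = zpt O a1 a2 ((v1 - (u1 * v1 + u2 * v2)) / 2)
      ((v2 + (u1 * v2 - u2 * v1)) / 2) := by
    have := pedal_zpt O a1 a2 0 0 v1 v2 (1 + u1 + v1) (u2 + v2) ((v1 - (u1 * v1 + u2 * v2)) / 2)
      ((v2 + (u1 * v2 - u2 * v1)) / 2) (by rw [← hCz, ← hHz]; exact hHC.symm) (by grind) (by grind)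
    rw [← hOz, ← hCz, ← hHz] at this
    rw [hCs, this]
  -- the circumcenter of the starred triangle is the midpoint of OH
  have key : ∀ P Q M : Pt, dist P M ^ 2 = dist Q M ^ 2 → dist P M = dist Q M := fun P Q M h =>
    (sq_eq_sq₀ dist_nonneg dist_nonneg).1 h
  have hcirc : circumcenter3 As Bs Cs hind =
      zpt O a1 a2 ((1 + u1 + v1) / 2) ((u2 + v2) / 2) := by
    have dd : ∀ z1 z2 w1 w2 : ℝ, dist (zpt O a1 a2 z1 z2) (zpt O a1 a2 w1 w2) ^ 2 =
        (a1 ^ 2 + a2 ^ 2) * ((z1 - w1) ^ 2 + (z2 - w2) ^ 2) := by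
      intro z1 z2 w1 w2
      rw [dist_sq_coords]; simp only [zpt0, zpt1]; ring
    refine circum_eq As Bs Cs _ hind (dist As (zpt O a1 a2 ((1 + u1 + v1) / 2) ((u2 + v2) / 2)))
      rfl (key _ _ _ ?_) (key _ _ _ ?_)
    · rw [eAs, eBs, dd, dd]; congr 1; grind
    · rw [eAs, eCs, dd, dd]; congr 1; grind
  have eHs : Hs = zpt O a1 a2
      ((-(1 + u1 + v1) - (u1 * v1 - u2 * v2) - 2 * (u1 * v1 + u2 * v2)) / 2)
      ((-(u2 + v2) - (u1 * v2 + u2 * v1)) / 2) := by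
    apply pt_ext
    · rw [hHs, ortho_coords, hcirc, eAs, eBs, eCs]; simp only [zpt0]; ring
    · rw [hHs, ortho_coords, hcirc, eAs, eBs, eCs]; simp only [zpt1]; ring
  obtain ⟨s, hs0, hs1⟩ := span_coords hJ1
  obtain ⟨t, ht0, ht1⟩ := span_coords hJ2
  have eJ : J = zpt O a1 a2 ((1 + u1 + v1 - (u1 * v1 + u2 * v2)) / 2) 0 := by
    have hA0 : A 0 = O 0 + a1 := by rw [hAz, zpt0]; ring
    have hA1 : A 1 = O 1 + a2 := by rw [hAz, zpt1]; ring
    rw [eBH, eCH] at ht0 ht1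
    simp only [zpt0, zpt1] at ht0 ht1
    rw [hA0] at hs0
    rw [hA1] at hs1
    have : 1 - s = (1 + u1 + v1 - (u1 * v1 + u2 * v2)) / 2 := by
      apply mul_left_cancel₀ hr
      linear_combination a1 * (ht0 - hs0) + a2 * (ht1 - hs1)
    apply pt_ext
    · rw [zpt0, ← this, hs0]; ring
    · rw [zpt1, ← this, hs1]; ring
  apply collinear_of_cross
  have fin : ((1 + u1 + v1 - (u1 * v1 + u2 * v2)) / 2 - (1 + u1 + v1 - (u1 * v1 - u2 * v2)) / 2) *
      ((-(u2 + v2) - (u1 * v2 + u2 * v1)) / 2 - (u2 + v2 - (u1 * v2 + u2 * v1)) / 2) -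
      (0 - (u2 + v2 - (u1 * v2 + u2 * v1)) / 2) *
      ((-(1 + u1 + v1) - (u1 * v1 - u2 * v2) - 2 * (u1 * v1 + u2 * v2)) / 2 -
       (1 + u1 + v1 - (u1 * v1 - u2 * v2)) / 2) = 0 := by grind
  rw [eAH, eJ, eHs]
  simp only [zpt0, zpt1]
  linear_combination (a1 ^ 2 + a2 ^ 2) * fin


end
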